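/- Let p be a probability measure on Δ_k that assigns zero mass to every set of Hausdorff dimension less than k−1, and let q be a probability measure on {e_1, …, e_k}. Then there exists a deterministic (Monge) optimal transport map T : Δ_k → {e_1,…,e_k}, i.e., a measurable map with T♯p = q and ∫ ‖x − T(x)‖₁ dp(x) = inf_{γ∈Γ(p,q)} ∫ ‖x − y‖₁ dγ(x,y), and this map is unique up to p-measure-zero sets. -/

import Mathlib

/-!
On the simplex the cost is affine: `‖x - e_y‖₁ = 2 (1 - x_y)`. The transport problem is therefore
solved by power (Laguerre) cells `{x | x_i + ψ_i ≥ x_j + ψ_j for all j}` for suitable weights `ψ`.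

The weights are a minimizer of the semi-dual functional `∫ max_i (x_i + ψ_i) dp - ∑ ψ_i q_i`. A
global minimizer exists in the cube `[0,1]^k` by compactness (`exists_semiDual_min`). First-order
optimality shows that the closed cell of vertex `i` has `p`-mass at least `q_i`
(`le_measure_cell`). Ties `x_i + ψ_i = x_j + ψ_j` within `∑ x = 1` form a set of dimension at most
`k - 2`, hence are `p`-null (`dimH_tie_lt`, `ae_mem_strictCell`). So the cells are disjoint up to
null sets, the mass inequalities are equalities, and the map `cellMap ψ` sending each cell to its
vertex pushes `p` to `q` (`map_cellMap`).

Integrating `2 + 2 ψ_y ≤ ‖x - e_y‖₁ + 2 max_i (x_i + ψ_i)` against any coupling gives the lower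
bound attained by `cellMap ψ`. An optimal map `T'` must attain equality almost everywhere, so
`T' x` is almost surely a maximizer of `x_i + ψ_i`, and off the ties that maximizer is unique.
-/

open MeasureTheory ProbabilityTheory
open scoped ENNReal NNReal BigOperators

noncomputable section

/-- The one-hot vector `e_i ∈ ℝ^k`. -/
def oneHot (k : ℕ) (i : Fin k) : Fin k → ℝ := fun j => if j = i then 1 else 0

/-- ℓ₁ transportation cost between a point of ℝ^k and a vertex `e_y`. -/
def l1Cost (k : ℕ) (s : Fin k → ℝ) (y : Fin k) : ℝ≥0∞ :=
  ENNReal.ofReal (∑ j, |s j - oneHot k y j|)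

/-- `γ` is a coupling of `p` and `q`. -/
def IsCoupling {α β : Type*} [MeasurableSpace α] [MeasurableSpace β]
    (γ : Measure (α × β)) (p : Measure α) (q : Measure β) : Prop :=
  γ.fst = p ∧ γ.snd = q

/-- Wasserstein-1 cost (under the ℓ₁ norm) between a distribution on the simplex
and a distribution on the vertices (encoded by `Fin k`). -/
def W1 (k : ℕ) (p : Measure (Fin k → ℝ)) (q : Measure (Fin k)) : ℝ≥0∞ :=
  ⨅ (γ : Measure ((Fin k → ℝ) × Fin k)) (_ : IsCoupling γ p q),
    ∫⁻ z, l1Cost k z.1 z.2 ∂γ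

/-- The probability simplex `Δ_k ⊂ ℝ^k`. -/
def simplexSet (k : ℕ) : Set (Fin k → ℝ) :=
  {x | (∀ i, 0 ≤ x i) ∧ ∑ i, x i = 1}

section Laguerre

variable {k : ℕ}

/-! ### The cost and the tie sets -/

lemma l1Cost_of_mem {x : Fin k → ℝ} (hx : x ∈ simplexSet k) (y : Fin k) :
    l1Cost k x y = ENNReal.ofReal (2 * (1 - x y)) := by
  unfold l1Cost
  congr 1
  have hy : x y ≤ 1 := by
    rw [← hx.2]; exact Finset.single_le_sum (fun i _ => hx.1 i) (Finset.mem_univ y)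
  have h1 := hx.2
  rw [← Finset.add_sum_erase _ _ (Finset.mem_univ y)] at h1 ⊢
  have : ∑ j ∈ Finset.univ.erase y, |x j - oneHot k y j| = ∑ j ∈ Finset.univ.erase y, x j := by
    refine Finset.sum_congr rfl fun j hj => ?_
    simp [oneHot, Finset.ne_of_mem_erase hj, abs_of_nonneg (hx.1 j)]
  rw [this]
  simp only [oneHot, if_true]
  rw [abs_of_nonpos (by linarith)]
  linarith

/-- The tie set is the image of `ℝ^(k-2)` under the affine map which recovers the coordinates `i`
and `j` from the other ones. -/
lemma dimH_tie_lt {i j : Fin k} (hij : i ≠ j) (c : ℝ) :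
    dimH {x : Fin k → ℝ | ∑ l, x l = 1 ∧ x i - x j = c} < (k : ℝ≥0∞) - 1 := by
  classical
  let f : ({l : Fin k // l ≠ i ∧ l ≠ j} → ℝ) → (Fin k → ℝ) := fun y l =>
    if h : l ≠ i ∧ l ≠ j then y ⟨l, h⟩ else
      if l = i then (1 - ∑ m, y m + c) / 2 else (1 - ∑ m, y m - c) / 2
  have hf : ContDiff ℝ 1 f := by
    rw [contDiff_pi]
    intro l
    by_cases h : l ≠ i ∧ l ≠ j
    · simp only [f, dif_pos h]; fun_prop
    · simp only [f, dif_neg h]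
      split_ifs <;> fun_prop
  have hsub : {x : Fin k → ℝ | ∑ l, x l = 1 ∧ x i - x j = c} ⊆ Set.range f := by
    rintro x ⟨hs, hc⟩
    refine ⟨fun l => x l, ?_⟩
    have hsum : ∑ m : {l : Fin k // l ≠ i ∧ l ≠ j}, x m = 1 - x i - x j := by
      rw [← Finset.sum_subtype (Finset.univ.filter fun l => l ≠ i ∧ l ≠ j) (by simp) x]
      rw [← Finset.add_sum_erase _ _ (Finset.mem_univ i),
        ← Finset.add_sum_erase _ _ (Finset.mem_erase.2 ⟨hij.symm, Finset.mem_univ j⟩)] at hs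
      have : (Finset.univ.filter fun l => l ≠ i ∧ l ≠ j) = (Finset.univ.erase i).erase j := by
        ext; simp; tauto
      rw [this]; linarith
    ext l
    by_cases h : l ≠ i ∧ l ≠ j
    · simp only [f, dif_pos h]
    · simp only [f, dif_neg h, hsum]
      split_ifs with hl
      · subst hl; linarith
      · have : l = j := by tauto
        subst this; linarith
  have hcard : Fintype.card {l : Fin k // l ≠ i ∧ l ≠ j} + 2 = k := by
    rw [Fintype.card_subtype]
    have : (Finset.univ.filter fun l => l ≠ i ∧ l ≠ j) = (Finset.univ.erase i).erase j := by
      ext; simp; tauto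
    rw [this, Finset.card_erase_of_mem (by simp [hij.symm]), Finset.card_erase_of_mem (by simp)]
    have : 1 < Fintype.card (Fin k) := Fintype.one_lt_card_iff.2 ⟨i, j, hij⟩
    simp at this ⊢
    omega
  refine ((dimH_mono hsub).trans hf.dimH_range_le).trans_lt ?_
  rw [Module.finrank_fintype_fun_eq_card]
  generalize Fintype.card {l : Fin k // l ≠ i ∧ l ≠ j} = n at hcard
  subst hcard
  have : ((n + 2 : ℕ) : ℝ≥0∞) - 1 = ((n + 1 : ℕ) : ℝ≥0∞) := by
    rw [show ((n + 2 : ℕ) : ℝ≥0∞) = ((n + 1 : ℕ) : ℝ≥0∞) + 1 by push_cast; ring]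
    exact ENNReal.add_sub_cancel_right (by simp)
  rw [this]
  exact_mod_cast Nat.lt_succ_self n

/-! ### The potential and the semi-dual problem -/

/-- The conjugate potential `x ↦ max_i (x_i + ψ_i)` of vertex weights `ψ`. -/
def maxPot [NeZero k] (ψ x : Fin k → ℝ) : ℝ :=
  Finset.univ.sup' Finset.univ_nonempty fun i => x i + ψ i

lemma le_maxPot [NeZero k] (ψ x : Fin k → ℝ) (i : Fin k) : x i + ψ i ≤ maxPot ψ x :=
  Finset.le_sup' (fun i => x i + ψ i) (Finset.mem_univ i)

lemma maxPot_le [NeZero k] {ψ x : Fin k → ℝ} {c : ℝ} (h : ∀ i, x i + ψ i ≤ c) :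
    maxPot ψ x ≤ c :=
  Finset.sup'_le _ _ fun i _ => h i

lemma exists_eq_maxPot [NeZero k] (ψ x : Fin k → ℝ) : ∃ i, x i + ψ i = maxPot ψ x := by
  obtain ⟨i, -, hi⟩ := Finset.exists_mem_eq_sup' Finset.univ_nonempty (fun i : Fin k => x i + ψ i)
  exact ⟨i, hi.symm⟩

lemma continuous_maxPot [NeZero k] :
    Continuous fun z : (Fin k → ℝ) × (Fin k → ℝ) => maxPot z.1 z.2 := by
  unfold maxPot
  exact Continuous.finset_sup'_apply _ fun i _ => by fun_prop

lemma measurable_maxPot [NeZero k] (ψ : Fin k → ℝ) : Measurable (maxPot ψ) :=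
  (continuous_maxPot.comp (Continuous.prodMk_right ψ)).measurable

lemma le_one_of_mem {x : Fin k → ℝ} (hx : x ∈ simplexSet k) (i : Fin k) : x i ≤ 1 := by
  rw [← hx.2]; exact Finset.single_le_sum (fun i _ => hx.1 i) (Finset.mem_univ i)

lemma abs_maxPot_le [NeZero k] {ψ x : Fin k → ℝ} (hx : x ∈ simplexSet k) {C : ℝ}
    (hψ : ∀ i, |ψ i| ≤ C) : |maxPot ψ x| ≤ 1 + C := by
  obtain ⟨i, hi⟩ := exists_eq_maxPot ψ x
  rw [← hi]
  have h1 := hx.1 i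
  have h2 := le_one_of_mem hx i
  have h3 := abs_le.1 (hψ i)
  rw [abs_le]; constructor <;> linarith

lemma ae_mem_simplex {p : Measure (Fin k → ℝ)} [IsProbabilityMeasure p]
    (hp : p (simplexSet k) = 1) : ∀ᵐ x ∂p, x ∈ simplexSet k := by
  have hm : MeasurableSet (simplexSet k) := by
    unfold simplexSet
    refine (IsClosed.and ?_ ?_).measurableSet
    · simp only [Set.ofPred_forall]
      exact isClosed_iInter fun i => isClosed_le continuous_const (continuous_apply i)
    · exact isClosed_eq (by fun_prop) continuous_const
  exact (mem_ae_iff_prob_eq_one hm).2 hp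

lemma integrable_maxPot [NeZero k] {p : Measure (Fin k → ℝ)} [IsProbabilityMeasure p]
    (hp : p (simplexSet k) = 1) (ψ : Fin k → ℝ) : Integrable (maxPot ψ) p := by
  refine Integrable.of_bound (measurable_maxPot ψ).aestronglyMeasurable (1 + ‖ψ‖) ?_
  filter_upwards [ae_mem_simplex hp] with x hx
  exact abs_maxPot_le hx fun i => norm_le_pi_norm ψ i

/-- The (convex) semi-dual functional of the transport problem, to be minimized. -/
def semiDual [NeZero k] (p : Measure (Fin k → ℝ)) (q : Measure (Fin k)) (ψ : Fin k → ℝ) : ℝ :=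
  ∫ x, maxPot ψ x ∂p - ∑ i, ψ i * q.real {i}

lemma sum_real_singleton (q : Measure (Fin k)) [IsProbabilityMeasure q] :
    ∑ i, q.real {i} = 1 := by
  rw [sum_measureReal_singleton]; simp

/-- Minimizing over the cube `[0,1]^k` suffices: every weight vector may be shifted by a constant
to have maximum `1`, which leaves `semiDual` unchanged, and then truncated below at `0`, which does
not increase it since the coordinates of simplex points lie in `[0,1]`. -/
lemma exists_semiDual_min [NeZero k] {p : Measure (Fin k → ℝ)} [IsProbabilityMeasure p]
    (hp : p (simplexSet k) = 1) (q : Measure (Fin k)) [IsProbabilityMeasure q] :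
    ∃ ψ : Fin k → ℝ, (∀ i, 0 ≤ ψ i) ∧ ∀ φ, semiDual p q ψ ≤ semiDual p q φ := by
  have hc : ContinuousOn (semiDual p q) (Set.Icc 0 1) := by
    unfold semiDual
    refine ContinuousOn.sub ?_ (by fun_prop)
    refine continuousOn_of_dominated (bound := fun _ => 1 + 1)
      (fun ψ _ => (measurable_maxPot ψ).aestronglyMeasurable) (fun ψ hψ => ?_)
      (integrable_const _) (.of_forall fun x => ?_)
    · filter_upwards [ae_mem_simplex hp] with x hx
      refine abs_maxPot_le hx fun i => ?_
      rw [abs_of_nonneg (hψ.1 i)]; exact hψ.2 i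
    · exact (continuous_maxPot.comp (Continuous.prodMk_left x)).continuousOn
  obtain ⟨ψ, hψ, hmin⟩ := isCompact_Icc.exists_isMinOn
    (⟨0, le_rfl, zero_le_one⟩ : (Set.Icc (0 : Fin k → ℝ) 1).Nonempty) hc
  refine ⟨ψ, hψ.1, fun φ => ?_⟩
  obtain ⟨j₀, -, hj₀⟩ := Finset.exists_max_image Finset.univ φ Finset.univ_nonempty
  set m := φ j₀
  let φ' : Fin k → ℝ := fun j => max (φ j - m + 1) 0
  have hφ' : φ' ∈ Set.Icc (0 : Fin k → ℝ) 1 := by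
    refine ⟨fun j => le_max_right _ _, fun j => max_le ?_ zero_le_one⟩
    have := hj₀ j (Finset.mem_univ j)
    simp only [Pi.one_apply]; linarith
  refine (hmin hφ').trans ?_
  have h1 : ∫ x, maxPot φ' x ∂p ≤ ∫ x, (maxPot φ x + (1 - m)) ∂p := by
    refine integral_mono_ae (integrable_maxPot hp φ')
      ((integrable_maxPot hp φ).add (integrable_const _)) ?_
    filter_upwards [ae_mem_simplex hp] with x hx
    refine maxPot_le fun j => ?_
    have h2 := le_maxPot φ x j
    have h3 := le_maxPot φ x j₀
    have h4 := hx.1 j₀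
    have h5 := le_one_of_mem hx j
    rcases max_cases (φ j - m + 1) 0 with h | h <;> simp only [φ', h.1] <;> linarith
  rw [integral_add (integrable_maxPot hp φ) (integrable_const _)] at h1
  have h2 : ∑ i, φ i * q.real {i} + (1 - m) ≤ ∑ i, φ' i * q.real {i} := by
    calc ∑ i, φ i * q.real {i} + (1 - m) = ∑ i, (φ i - m + 1) * q.real {i} := by
          simp only [add_mul, sub_mul, Finset.sum_add_distrib, Finset.sum_sub_distrib,
            ← Finset.mul_sum, sum_real_singleton]
          ring
      _ ≤ _ := Finset.sum_le_sum fun i _ =>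
          mul_le_mul_of_nonneg_right (le_max_left _ _) measureReal_nonneg
  simp only [integral_const, probReal_univ, smul_eq_mul, one_mul] at h1
  unfold semiDual
  linarith

/-- First-order optimality: increasing `ψ_i` by `t` raises the integral of `maxPot ψ` by at most
`t` times the mass of the points where `i` is within `t` of being a maximizer; then `t → 0`. -/
lemma le_measure_cell [NeZero k] {p : Measure (Fin k → ℝ)} [IsProbabilityMeasure p]
    (hp : p (simplexSet k) = 1) (q : Measure (Fin k)) [IsProbabilityMeasure q]
    {ψ : Fin k → ℝ} (hψ : ∀ φ, semiDual p q ψ ≤ semiDual p q φ) (i : Fin k) :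
    q {i} ≤ p {x | maxPot ψ x ≤ x i + ψ i} := by
  have hmeas : ∀ t : ℝ, MeasurableSet {x : Fin k → ℝ | maxPot ψ x ≤ x i + ψ i + t} := fun t =>
    measurableSet_le (measurable_maxPot ψ) (by fun_prop)
  have key : ∀ t : ℝ, 0 < t → q {i} ≤ p {x | maxPot ψ x ≤ x i + ψ i + t} := by
    intro t ht
    set S := {x : Fin k → ℝ | maxPot ψ x ≤ x i + ψ i + t}
    let φ : Fin k → ℝ := ψ + Pi.single i t
    have hpt : ∀ x, maxPot φ x ≤ maxPot ψ x + S.indicator (fun _ => t) x := by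
      intro x
      refine maxPot_le fun j => ?_
      have h2 := le_maxPot ψ x j
      have h0 : 0 ≤ S.indicator (fun _ => t) x := Set.indicator_nonneg (fun _ _ => ht.le) x
      by_cases hj : j = i
      · subst hj
        simp only [φ, Pi.add_apply, Pi.single_eq_same]
        by_cases hx : x ∈ S
        · rw [Set.indicator_of_mem hx]; linarith
        · have : ¬ maxPot ψ x ≤ x j + ψ j + t := hx
          linarith
      · simp only [φ, Pi.add_apply, Pi.single_eq_of_ne hj]; linarith
    have hind : Integrable (S.indicator fun _ => t) p :=
      (integrable_const t).indicator (hmeas t)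
    have h1 := integral_mono (integrable_maxPot hp φ) ((integrable_maxPot hp ψ).add hind) hpt
    simp only [Pi.add_apply] at h1
    rw [integral_add (integrable_maxPot hp ψ) hind, integral_indicator_const t (hmeas t),
      smul_eq_mul] at h1
    have h2 := hψ φ
    have h3 : ∑ j, φ j * q.real {j} = ∑ j, ψ j * q.real {j} + t * q.real {i} := by
      simp [φ, add_mul, Finset.sum_add_distrib, Pi.single_apply]
    unfold semiDual at h2
    rw [h3] at h2
    have h4 : q.real {i} ≤ p.real S := by
      refine le_of_mul_le_mul_left ?_ ht
      linarith
    exact (ENNReal.toReal_le_toReal (measure_ne_top _ _) (measure_ne_top _ _)).1 h4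
  have hlim := tendsto_measure_iInter_atTop (μ := p)
    (s := fun n : ℕ => {x : Fin k → ℝ | maxPot ψ x ≤ x i + ψ i + 1 / ((n : ℝ) + 1)})
    (fun n => (hmeas _).nullMeasurableSet)
    (fun a b hab x hx => le_trans (Set.mem_ofPred.1 hx) (by
      have := Nat.one_div_le_one_div (α := ℝ) hab
      linarith)) ⟨0, measure_ne_top _ _⟩
  have hset : (⋂ n : ℕ, {x : Fin k → ℝ | maxPot ψ x ≤ x i + ψ i + 1 / ((n : ℝ) + 1)}) =
      {x | maxPot ψ x ≤ x i + ψ i} := by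
    ext x
    simp only [Set.mem_iInter, Set.mem_ofPred_eq]
    constructor
    · intro h
      have := (tendsto_one_div_add_atTop_nhds_zero_nat (𝕜 := ℝ)).const_add (x i + ψ i)
      rw [add_zero] at this
      exact ge_of_tendsto' this h
    · intro h n
      have := Nat.one_div_pos_of_nat (α := ℝ) (n := n)
      linarith
  rw [hset] at hlim
  exact ge_of_tendsto' hlim fun n => key _ Nat.one_div_pos_of_nat

/-! ### Laguerre cells and the transport map -/

/-- The open Laguerre cell of vertex `i`: the points at which `i` is the only maximizer of
`x_i + ψ_i`. -/
def strictCell (ψ : Fin k → ℝ) (i : Fin k) : Set (Fin k → ℝ) :=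
  {x | ∀ j, j ≠ i → x j + ψ j < x i + ψ i}

lemma measurableSet_strictCell (ψ : Fin k → ℝ) (i : Fin k) : MeasurableSet (strictCell ψ i) := by
  have : strictCell ψ i = ⋂ j, ⋂ _ : j ≠ i, {x | x j + ψ j < x i + ψ i} := by
    ext; simp [strictCell]
  rw [this]
  exact .iInter fun j => .iInter fun _ => measurableSet_lt (by fun_prop) (by fun_prop)

lemma strictCell_unique {ψ x : Fin k → ℝ} {i j : Fin k} (hi : x ∈ strictCell ψ i)
    (hj : x ∈ strictCell ψ j) : i = j := by
  by_contra h
  exact lt_asymm (hi j (Ne.symm h)) (hj i h)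

/-- Ties between two weighted coordinates have dimension at most `k - 2` within the simplex, so
almost every point lies in the open cell of each of its maximizers. -/
lemma ae_mem_strictCell [NeZero k] {p : Measure (Fin k → ℝ)} [IsProbabilityMeasure p]
    (hp : p (simplexSet k) = 1)
    (hpcont : ∀ s : Set (Fin k → ℝ), dimH s < (k : ℝ≥0∞) - 1 → p s = 0) (ψ : Fin k → ℝ) :
    ∀ᵐ x ∂p, ∀ i, maxPot ψ x ≤ x i + ψ i → x ∈ strictCell ψ i := by
  have htie : ∀ᵐ x ∂p, ∀ i j : Fin k, i ≠ j →
      x ∉ {x : Fin k → ℝ | ∑ l, x l = 1 ∧ x i - x j = ψ j - ψ i} := by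
    rw [ae_all_iff]; intro i
    rw [ae_all_iff]; intro j
    by_cases hij : i = j
    · simp [hij]
    · have := measure_eq_zero_iff_ae_notMem.1 (hpcont _ (dimH_tie_lt hij (ψ j - ψ i)))
      filter_upwards [this] with x hx _ using hx
  filter_upwards [htie, ae_mem_simplex hp] with x hx hxs i hi j hj
  refine lt_of_le_of_ne ((le_maxPot ψ x j).trans hi) fun h => ?_
  exact hx i j hj.symm ⟨hxs.2, by linarith⟩

open Classical in
/-- The transport map sending each open cell to its vertex; the value on the tie set is the
irrelevant default `0`. -/
def cellMap [NeZero k] (ψ x : Fin k → ℝ) : Fin k :=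
  if h : ∃ i, x ∈ strictCell ψ i then h.choose else 0

lemma cellMap_eq [NeZero k] {ψ x : Fin k → ℝ} {i : Fin k} (hi : x ∈ strictCell ψ i) :
    cellMap ψ x = i := by
  have h : ∃ i, x ∈ strictCell ψ i := ⟨i, hi⟩
  rw [cellMap, dif_pos h]
  exact strictCell_unique h.choose_spec hi

lemma measurable_cellMap [NeZero k] (ψ : Fin k → ℝ) : Measurable (cellMap ψ) := by
  refine measurable_to_countable' fun i => ?_
  have : cellMap ψ ⁻¹' {i} =
      strictCell ψ i ∪ ({_x | i = 0} ∩ (⋃ j, strictCell ψ j)ᶜ) := by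
    ext x
    simp only [Set.mem_preimage, Set.mem_singleton_iff, Set.mem_union, Set.mem_inter_iff,
      Set.mem_ofPred_eq, Set.mem_compl_iff, Set.mem_iUnion]
    by_cases h : ∃ j, x ∈ strictCell ψ j
    · obtain ⟨j, hj⟩ := h
      rw [cellMap_eq hj]
      constructor
      · rintro rfl; exact .inl hj
      · rintro (hi | hi)
        · exact strictCell_unique hj hi
        · exact absurd ⟨j, hj⟩ hi.2
    · have hi : x ∉ strictCell ψ i := fun hi => h ⟨i, hi⟩
      simp only [cellMap, hi, h, not_false_eq_true, and_true, false_or]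
      exact eq_comm
  rw [this]
  exact (measurableSet_strictCell ψ i).union ((MeasurableSet.const _).inter
    (MeasurableSet.iUnion fun j => measurableSet_strictCell ψ j).compl)

/-- Each cell has mass at least that of its vertex, and total masses agree, so all are equal. -/
lemma map_cellMap [NeZero k] {p : Measure (Fin k → ℝ)} [IsProbabilityMeasure p]
    (hp : p (simplexSet k) = 1)
    (hpcont : ∀ s : Set (Fin k → ℝ), dimH s < (k : ℝ≥0∞) - 1 → p s = 0)
    (q : Measure (Fin k)) [IsProbabilityMeasure q]
    {ψ : Fin k → ℝ} (hψ : ∀ φ, semiDual p q ψ ≤ semiDual p q φ) :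
    p.map (cellMap ψ) = q := by
  have hT := measurable_cellMap ψ
  have : IsProbabilityMeasure (p.map (cellMap ψ)) := Measure.isProbabilityMeasure_map hT.aemeasurable
  have hle : ∀ i, q {i} ≤ p.map (cellMap ψ) {i} := by
    intro i
    rw [Measure.map_apply hT (measurableSet_singleton i)]
    refine (le_measure_cell hp q hψ i).trans (measure_mono_ae ?_)
    filter_upwards [ae_mem_strictCell hp hpcont ψ] with x hx h
    exact cellMap_eq (hx i h)
  refine (Measure.eq_of_le_of_isProbabilityMeasure (Measure.le_iff.2 fun s _ => ?_)).symm
  have hs : s = ((Set.toFinite s).toFinset : Set (Fin k)) := by simp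
  rw [hs, ← sum_measure_singleton, ← sum_measure_singleton]
  exact Finset.sum_le_sum fun i _ => hle i

lemma measurable_l1Cost : Measurable fun z : (Fin k → ℝ) × Fin k => l1Cost k z.1 z.2 := by
  refine measurable_from_prod_countable_left fun y => ?_
  unfold l1Cost
  fun_prop

lemma measurable_l1Cost_map {T : (Fin k → ℝ) → Fin k} (hT : Measurable T) :
    Measurable fun x => l1Cost k x (T x) := by
  have hm : Measurable fun x => (x, T x) := measurable_id.prodMk hT
  exact (measurable_l1Cost (k := k)).comp hm

end Laguerre

/-- **Existence and uniqueness of the Monge optimal transport for the semi-discrete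
simplex-vertex problem** (Lemma D.5).  If `p` is a probability measure on the simplex
`Δ_k` assigning zero mass to every set of Hausdorff dimension less than `k − 1`, and `q`
is a probability measure on the vertices (encoded by `Fin k`), then there is a
deterministic measurable map `T` pushing `p` forward to `q` whose ℓ₁ transportation cost
equals the optimal coupling cost `W₁(p, q)`, and any two such maps agree `p`-almost
everywhere. -/
theorem monge_exists_unique_simplex_vertex (k : ℕ)
    (p : Measure (Fin k → ℝ)) [IsProbabilityMeasure p] (hp : p (simplexSet k) = 1)
    (hpcont : ∀ s : Set (Fin k → ℝ), dimH s < (k : ℝ≥0∞) - 1 → p s = 0)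
    (q : Measure (Fin k)) [IsProbabilityMeasure q] :
    ∃ T : (Fin k → ℝ) → Fin k, Measurable T ∧ p.map T = q ∧
      (∫⁻ x, l1Cost k x (T x) ∂p) = W1 k p q ∧
      ∀ T' : (Fin k → ℝ) → Fin k, Measurable T' → p.map T' = q →
        (∫⁻ x, l1Cost k x (T' x) ∂p) = W1 k p q → T' =ᵐ[p] T := by
  have hk : NeZero k := by
    refine ⟨?_⟩
    rintro rfl
    have h := measure_univ (μ := q)
    rw [Set.univ_eq_empty_iff.2 inferInstance, measure_empty] at h
    exact zero_ne_one h
  obtain ⟨ψ, hψ0, hψ⟩ := exists_semiDual_min hp q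
  have hsx := ae_mem_simplex hp
  have hcell := ae_mem_strictCell hp hpcont ψ
  have hT := measurable_cellMap ψ
  have hmap := map_cellMap hp hpcont q hψ
  -- Complementary slackness, rearranged so that all terms are nonnegative:
  -- `2 + 2 ψ_y ≤ c(x, y) + 2 max_i (x_i + ψ_i)`, with equality iff `y` is a maximizer.
  let B : Fin k → ℝ≥0∞ := fun y => ENNReal.ofReal (2 + 2 * ψ y)
  let A : (Fin k → ℝ) → ℝ≥0∞ := fun x => ENNReal.ofReal (2 * maxPot ψ x)
  have hAm : Measurable A := ((measurable_maxPot ψ).const_mul 2).ennreal_ofReal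
  have hBm : Measurable B := measurable_of_countable B
  have hsum : ∀ x ∈ simplexSet k, ∀ y,
      l1Cost k x y + A x = ENNReal.ofReal (2 * (1 - x y) + 2 * maxPot ψ x) := by
    intro x hx y
    have h1 := le_one_of_mem hx y
    have h2 := le_maxPot ψ x y
    have h3 := hx.1 y
    have h4 := hψ0 y
    rw [l1Cost_of_mem hx, ← ENNReal.ofReal_add (by linarith) (by linarith)]
  have hle : ∀ x ∈ simplexSet k, ∀ y, B y ≤ l1Cost k x y + A x := by
    intro x hx y
    rw [hsum x hx y]
    have := le_maxPot ψ x y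
    exact ENNReal.ofReal_le_ofReal (by linarith)
  have heq : ∀ x ∈ simplexSet k, ∀ y, B y = l1Cost k x y + A x → maxPot ψ x ≤ x y + ψ y := by
    intro x hx y h
    rw [hsum x hx y] at h
    have h1 := le_one_of_mem hx y
    have h2 := le_maxPot ψ x y
    have h3 := hx.1 y
    have h4 := hψ0 y
    rw [ENNReal.ofReal_eq_ofReal_iff (by linarith) (by linarith)] at h
    linarith
  have hAfin : ∫⁻ x, A x ∂p ≠ ∞ :=
    ((integrable_maxPot hp ψ).const_mul 2).lintegral_lt_top.ne
  have hBfin : ∫⁻ y, B y ∂q ≠ ∞ := by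
    rw [lintegral_fintype]
    exact (ENNReal.sum_lt_top.2 fun i _ =>
      ENNReal.mul_lt_top ENNReal.ofReal_lt_top (measure_lt_top _ _)).ne
  have hTcost : ∫⁻ x, l1Cost k x (cellMap ψ x) ∂p + ∫⁻ x, A x ∂p = ∫⁻ y, B y ∂q := by
    rw [← lintegral_add_right _ hAm]
    conv_rhs => rw [← hmap, lintegral_map hBm hT]
    refine lintegral_congr_ae ?_
    filter_upwards [hsx, hcell] with x hx hxc
    obtain ⟨i, hi⟩ := exists_eq_maxPot ψ x
    rw [cellMap_eq (hxc i hi.ge), hsum x hx i, ← hi]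
    simp only [B]
    congr 1; ring
  have hopt : ∫⁻ x, l1Cost k x (cellMap ψ x) ∂p = W1 k p q := by
    unfold W1
    apply le_antisymm
    · refine le_iInf fun γ => le_iInf fun hγ => ?_
      rw [← ENNReal.add_le_add_iff_right hAfin, hTcost]
      have hA' : ∫⁻ x, A x ∂p = ∫⁻ z, A z.1 ∂γ := by
        rw [← hγ.1, Measure.fst, lintegral_map hAm measurable_fst]
      have hB' : ∫⁻ y, B y ∂q = ∫⁻ z, B z.2 ∂γ := by
        rw [← hγ.2, Measure.snd, lintegral_map hBm measurable_snd]
      rw [hA', hB', ← lintegral_add_right _ (show Measurable fun z : (Fin k → ℝ) × Fin k => A z.1 from hAm.comp measurable_fst)]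
      have hγs : ∀ᵐ z ∂γ, z.1 ∈ simplexSet k := by
        rw [← hγ.1, Measure.fst] at hsx
        exact ae_of_ae_map measurable_fst.aemeasurable hsx
      refine lintegral_mono_ae ?_
      filter_upwards [hγs] with z hz using hle _ hz _
    · have hm : Measurable fun x => (x, cellMap ψ x) := measurable_id.prodMk hT
      have hcoup : IsCoupling (p.map fun x => (x, cellMap ψ x)) p q :=
        ⟨(Measure.fst_map_prodMk hT).trans Measure.map_id,
          (Measure.snd_map_prodMk measurable_id).trans hmap⟩
      have hval : ∫⁻ z, l1Cost k z.1 z.2 ∂(p.map fun x => (x, cellMap ψ x)) =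
          ∫⁻ x, l1Cost k x (cellMap ψ x) ∂p := lintegral_map measurable_l1Cost hm
      rw [← hval]
      exact iInf_le_of_le _ (iInf_le _ hcoup)
  refine ⟨cellMap ψ, hT, hmap, hopt, fun T' hT' hmap' hcost' => ?_⟩
  have hint : ∫⁻ x, B (T' x) ∂p = ∫⁻ y, B y ∂q := by
    rw [← hmap', lintegral_map hBm hT']
  -- An optimal map attains equality in the integrated inequality, hence almost everywhere.
  have hae : (fun x => B (T' x)) =ᵐ[p] fun x => l1Cost k x (T' x) + A x := by
    refine ae_eq_of_ae_le_of_lintegral_le ?_ (by rw [hint]; exact hBfin)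
      ((measurable_l1Cost_map hT').add hAm).aemeasurable ?_
    · filter_upwards [hsx] with x hx using hle x hx _
    · rw [lintegral_add_right _ hAm, hcost', ← hopt, hTcost, hint]
  filter_upwards [hae, hsx, hcell] with x hx hxs hxc
  exact (cellMap_eq (hxc _ (heq x hxs _ hx))).symm

end
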